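/- Let T be an invertible symmetric 3×3 real matrix and define the density J(n) = N_T / (nᵀ T⁻² n)² on the unit sphere S², where N_T > 0 is chosen so that ∫_{S²} J(n) dS(n) = 1. Then for every unit vector n₀, ∫_{S²} J(n) 1_{n₀·n > 0} n dS(n) = π N_T |det T| · T² n₀ / √(n₀ᵀ T² n₀). -/

import Mathlib

open MeasureTheory RealInnerProductSpace

/-!
Integrate the vector field `x ↦ exp (-‖A⁻¹ x‖²) x` over the half-space `{x | 0 < ⟪m, x⟫}` in two
ways. In polar coordinates the radial integral is a multiple of `‖A⁻¹ n‖ ^ -(d + 1)`, `d` being the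
dimension; for `A = T` and `d = 3` this is proportional to `J`. The substitution `x = A y` instead
reduces it to the isotropic Gaussian on the half-space of `A† m`, whose first moment lies on the
axis `ℝ ∙ A† m` by reflection symmetry and has a one-dimensional integral as its length.
-/

section ChangeOfVariables

variable {E F : Type*} [NormedAddCommGroup E] [NormedSpace ℝ E] [FiniteDimensional ℝ E]
  [MeasurableSpace E] [BorelSpace E] [NormedAddCommGroup F]
  (μ : Measure E) [μ.IsAddHaarMeasure]

theorem map_linearEquiv_addHaar_eq_smul_addHaar (A : E ≃ₗ[ℝ] E) :
    μ.map A = ENNReal.ofReal |LinearMap.det (A : E →ₗ[ℝ] E)|⁻¹ • μ := by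
  rw [← abs_inv]
  exact Measure.map_linearMap_addHaar_eq_smul_addHaar μ A.isUnit_det'.ne_zero

theorem measurableEmbedding_linearEquiv (A : E ≃ₗ[ℝ] E) : MeasurableEmbedding A :=
  A.toContinuousLinearEquiv.toHomeomorph.measurableEmbedding

theorem integrable_comp_linearEquiv_iff (A : E ≃ₗ[ℝ] E) {f : E → F} :
    Integrable (fun x ↦ f (A x)) μ ↔ Integrable f μ := by
  have hdet : 0 < |LinearMap.det (A : E →ₗ[ℝ] E)|⁻¹ := by
    simpa using A.isUnit_det'.ne_zero
  rw [← Function.comp_def, ← (measurableEmbedding_linearEquiv A).integrable_map_iff,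
    map_linearEquiv_addHaar_eq_smul_addHaar,
    integrable_smul_measure (by simpa using hdet) ENNReal.ofReal_ne_top]

theorem setIntegral_preimage_linearEquiv [NormedSpace ℝ F] (A : E ≃ₗ[ℝ] E) (s : Set E)
    (f : E → F) :
    ∫ x in A ⁻¹' s, f (A x) ∂μ = |LinearMap.det (A : E →ₗ[ℝ] E)|⁻¹ • ∫ x in s, f x ∂μ := by
  rw [← (measurableEmbedding_linearEquiv A).setIntegral_map,
    map_linearEquiv_addHaar_eq_smul_addHaar, Measure.restrict_smul, integral_smul_measure,
    ENNReal.toReal_ofReal (by positivity)]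

end ChangeOfVariables

section PolarCoordinates

open Module Metric

theorem integral_volumeIoiPow {F : Type*} [NormedAddCommGroup F] [NormedSpace ℝ F] (k : ℕ)
    (f : ℝ → F) :
    ∫ r : Set.Ioi (0 : ℝ), f r ∂Measure.volumeIoiPow k = ∫ r in Set.Ioi 0, r ^ k • f r := by
  simp only [Measure.volumeIoiPow, ENNReal.ofReal]
  rw [integral_withDensity_eq_integral_smul (by fun_prop),
    integral_subtype_comap measurableSet_Ioi fun r : ℝ ↦ Real.toNNReal (r ^ k) • f r]
  refine setIntegral_congr_fun measurableSet_Ioi fun r hr ↦ ?_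
  simp only [NNReal.smul_def, Real.coe_toNNReal _ (pow_nonneg (le_of_lt hr) k)]

variable {E : Type*} [NormedAddCommGroup E] [NormedSpace ℝ E] [MeasurableSpace E]
  [BorelSpace E]

theorem measurableEmbedding_smul_sphere :
    MeasurableEmbedding fun p : sphere (0 : E) 1 × Set.Ioi (0 : ℝ) ↦ (p.2 : ℝ) • (p.1 : E) :=
  (MeasurableEmbedding.subtype_coe (measurableSet_singleton (0 : E)).compl).comp
    (homeomorphUnitSphereProd E).symm.measurableEmbedding

variable [FiniteDimensional ℝ E] [Nontrivial E] (μ : Measure E) [μ.IsAddHaarMeasure]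

theorem measurePreserving_smul_toSphere :
    MeasurePreserving (fun p : sphere (0 : E) 1 × Set.Ioi (0 : ℝ) ↦ (p.2 : ℝ) • (p.1 : E))
      (μ.toSphere.prod (Measure.volumeIoiPow (finrank ℝ E - 1))) μ := by
  have hsymm := MeasurePreserving.symm (homeomorphUnitSphereProd E).toMeasurableEquiv
    μ.measurePreserving_homeomorphUnitSphereProd
  have hcoe := measurePreserving_subtype_coe (μa := μ) (measurableSet_singleton (0 : E)).compl
  rw [restrict_compl_singleton] at hcoe
  exact hcoe.comp hsymm

variable {F : Type*} [NormedAddCommGroup F] [NormedSpace ℝ F]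

theorem integral_eq_integral_toSphere_integral_Ioi {f : E → F} (hf : Integrable f μ) :
    ∫ x, f x ∂μ =
      ∫ n : sphere (0 : E) 1, (∫ r in Set.Ioi (0 : ℝ), r ^ (finrank ℝ E - 1) • f (r • (n : E)))
        ∂μ.toSphere := by
  have hint : Integrable (fun p : sphere (0 : E) 1 × Set.Ioi (0 : ℝ) ↦ f ((p.2 : ℝ) • (p.1 : E)))
      (μ.toSphere.prod (Measure.volumeIoiPow (finrank ℝ E - 1))) :=
    ((measurePreserving_smul_toSphere μ).integrable_comp_emb measurableEmbedding_smul_sphere).2 hf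
  rw [← (measurePreserving_smul_toSphere μ).integral_comp measurableEmbedding_smul_sphere,
    integral_prod _ hint]
  exact integral_congr_ae (.of_forall fun n ↦ integral_volumeIoiPow _ fun r ↦ f (r • (n : E)))

theorem setIntegral_eq_integral_toSphere_integral_Ioi {s : Set E} (hs : MeasurableSet s)
    (hcone : ∀ r : ℝ, 0 < r → ∀ x, r • x ∈ s ↔ x ∈ s) {f : E → F} (hf : IntegrableOn f s μ) :
    ∫ x in s, f x ∂μ = ∫ n : sphere (0 : E) 1 in (↑) ⁻¹' s,
      (∫ r in Set.Ioi (0 : ℝ), r ^ (finrank ℝ E - 1) • f (r • (n : E))) ∂μ.toSphere := by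
  rw [← integral_indicator hs, ← integral_indicator (measurable_subtype_coe hs),
    integral_eq_integral_toSphere_integral_Ioi μ (hf.integrable_indicator hs)]
  refine integral_congr_ae (.of_forall fun n ↦ ?_)
  by_cases hn : (n : E) ∈ s
  · rw [Set.indicator_of_mem (Set.mem_preimage.2 hn)]
    refine setIntegral_congr_fun measurableSet_Ioi fun r hr ↦ ?_
    simp only [Set.indicator_of_mem ((hcone r hr n).2 hn)]
  · rw [Set.indicator_of_notMem (mt Set.mem_preimage.1 hn)]
    refine setIntegral_eq_zero_of_forall_eq_zero fun r hr ↦ ?_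
    rw [Set.indicator_of_notMem (mt (hcone r hr n).1 hn), smul_zero]

end PolarCoordinates

section GaussianIntegrals

open Module

theorem integral_pow_mul_exp_neg_sq_mul (k : ℕ) {c : ℝ} (hc : 0 < c) :
    ∫ r in Set.Ioi (0 : ℝ), r ^ k * Real.exp (-(c * r) ^ 2) =
      Real.Gamma ((k + 1) / 2) / (2 * c ^ (k + 1)) := by
  have h := integral_rpow_mul_exp_neg_mul_rpow (p := 2) (q := k) (b := c ^ 2) two_pos
    (by linarith [k.cast_nonneg (α := ℝ)]) (by positivity)
  have hpow : (c ^ 2) ^ (-((k : ℝ) + 1) / 2) = (c ^ (k + 1))⁻¹ := by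
    rw [← Real.rpow_natCast c 2, ← Real.rpow_mul hc.le, ← Real.rpow_natCast, ← Real.rpow_neg hc.le]
    congr 1
    push_cast
    ring
  simp only [Real.rpow_natCast, Real.rpow_ofNat, hpow] at h
  simp only [mul_pow, ← neg_mul, h]
  field_simp

theorem integral_exp_neg_sq_mul_indicator_Ioi_id :
    ∫ t : ℝ, Real.exp (-t ^ 2) * (Set.Ioi 0).indicator id t = 1 / 2 := calc
  _ = ∫ t in Set.Ioi (0 : ℝ), t ^ 1 * Real.exp (-(1 * t) ^ 2) := by
    rw [← integral_indicator measurableSet_Ioi]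
    refine integral_congr_ae (.of_forall fun t ↦ ?_)
    simp [Set.indicator_apply, mul_comm]
  _ = 1 / 2 := by
    rw [integral_pow_mul_exp_neg_sq_mul 1 one_pos]
    norm_num

section NormedSpace

variable {E F : Type*} [NormedAddCommGroup E] [NormedSpace ℝ E] [FiniteDimensional ℝ E]

theorem integral_Ioi_pow_smul_exp_neg_sq_norm_map_smul [Nontrivial E] [NormedAddCommGroup F]
    [NormedSpace ℝ F] (B : E →ₗ[ℝ] F) {x : E} (hx : B x ≠ 0) :
    ∫ r in Set.Ioi (0 : ℝ), r ^ (finrank ℝ E - 1) • Real.exp (-‖B (r • x)‖ ^ 2) • r • x =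
      (Real.Gamma ((finrank ℝ E + 1) / 2) / 2) • (‖B x‖ ^ (finrank ℝ E + 1))⁻¹ • x := calc
  _ = ∫ r in Set.Ioi (0 : ℝ), (r ^ finrank ℝ E * Real.exp (-(‖B x‖ * r) ^ 2)) • x := by
    refine setIntegral_congr_fun measurableSet_Ioi fun r hr ↦ ?_
    rw [map_smul, norm_smul, Real.norm_of_nonneg (le_of_lt hr), smul_smul, smul_smul,
      ← pow_sub_one_mul finrank_pos.ne' r, mul_comm r ‖B x‖, mul_right_comm]
  _ = _ := by
    rw [integral_smul_const, integral_pow_mul_exp_neg_sq_mul _ (norm_pos_iff.2 hx), smul_smul,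
      div_mul_eq_div_div, div_eq_mul_inv]

variable [MeasurableSpace E] [BorelSpace E] (μ : Measure E) [μ.IsAddHaarMeasure]

theorem integrable_exp_neg_sq_norm_smul :
    Integrable (fun x : E ↦ Real.exp (-‖x‖ ^ 2) • x) μ := by
  rcases subsingleton_or_nontrivial E with hE | hE
  · exact (integrable_zero E E μ).congr (.of_forall fun x ↦ Subsingleton.elim _ _)
  refine (integrable_norm_iff (by fun_prop)).1 ?_
  simp only [norm_smul, Real.norm_of_nonneg (Real.exp_nonneg _)]
  refine (integrable_fun_norm_addHaar μ (f := fun r ↦ Real.exp (-r ^ 2) * r)).2 ?_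
  have h := integrableOn_rpow_mul_exp_neg_mul_sq one_pos (s := finrank ℝ E)
    (by linarith [(finrank ℝ E).cast_nonneg (α := ℝ)])
  refine h.congr_fun (fun r _ ↦ ?_) measurableSet_Ioi
  dsimp only
  rw [Real.rpow_natCast, ← pow_sub_one_mul finrank_pos.ne' r, smul_eq_mul, neg_one_mul, mul_assoc,
    mul_comm r]

theorem integrable_exp_neg_sq_norm_symm_smul (A : E ≃ₗ[ℝ] E) :
    Integrable (fun x : E ↦ Real.exp (-‖A.symm x‖ ^ 2) • x) μ := by
  rw [← integrable_comp_linearEquiv_iff μ A]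
  simpa using A.toContinuousLinearEquiv.toContinuousLinearMap.integrable_comp
    (integrable_exp_neg_sq_norm_smul μ)

end NormedSpace

variable {E : Type*} [NormedAddCommGroup E] [InnerProductSpace ℝ E] [FiniteDimensional ℝ E]
  [MeasurableSpace E] [BorelSpace E]

theorem integral_mul_comp_orthogonalProjectionOnto {𝕜 : Type*} [RCLike 𝕜] (K : Submodule ℝ E)
    (f : K → 𝕜) (g : Kᗮ → 𝕜) :
    ∫ x : E, f (K.orthogonalProjectionOnto x) * g (Kᗮ.orthogonalProjectionOnto x) =
      (∫ y, f y) * ∫ z, g z := by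
  have hK := (WithLp.volume_preserving_ofLp K Kᗮ).comp K.orthogonalDecomposition.measurePreserving
  have hK' : MeasurableEmbedding (WithLp.ofLp ∘ K.orthogonalDecomposition) :=
    (MeasurableEquiv.toLp 2 (K × Kᗮ)).symm.measurableEmbedding.comp
      K.orthogonalDecomposition.toHomeomorph.measurableEmbedding
  rw [← integral_prod_mul, ← Measure.volume_eq_prod, ← hK.integral_comp hK']
  simp

theorem integral_exp_neg_sq_norm_mul_comp_inner {u : E} (hu : ‖u‖ = 1) (f : ℝ → ℝ) :
    ∫ x, Real.exp (-‖x‖ ^ 2) * f ⟪u, x⟫ =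
      Real.pi ^ (((finrank ℝ E : ℝ) - 1) / 2) * ∫ t, Real.exp (-t ^ 2) * f t := by
  have hsplit (x : E) : Real.exp (-‖x‖ ^ 2) * f ⟪u, x⟫ =
      (Real.exp (-‖(ℝ ∙ u).orthogonalProjectionOnto x‖ ^ 2) *
          f ⟪u, (ℝ ∙ u).orthogonalProjectionOnto x⟫) *
        Real.exp (-1 * ‖(ℝ ∙ u)ᗮ.orthogonalProjectionOnto x‖ ^ 2) := by
    have hinner : ⟪u, x⟫ = ⟪u, (ℝ ∙ u).orthogonalProjectionOnto x⟫ :=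
      ((ℝ ∙ u).inner_orthogonalProjectionOnto_eq_of_mem_left
        ⟨u, Submodule.mem_span_singleton_self u⟩ x).symm
    rw [Submodule.norm_sq_eq_add_norm_sq_projection x (ℝ ∙ u), hinner, neg_add, Real.exp_add]
    ring_nf
  have hline : ∫ y : ℝ ∙ u, Real.exp (-‖y‖ ^ 2) * f ⟪u, y⟫ = ∫ t, Real.exp (-t ^ 2) * f t := by
    let e := LinearIsometryEquiv.toSpanUnitSingleton u hu (𝕜 := ℝ)
    rw [← e.measurePreserving.integral_comp e.toHomeomorph.measurableEmbedding]
    simp [e, norm_smul, inner_smul_right, hu]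
  have hrank : (finrank ℝ (ℝ ∙ u)ᗮ : ℝ) = finrank ℝ E - 1 := by
    rw [← (ℝ ∙ u).finrank_add_finrank_orthogonal,
      finrank_span_singleton (ne_zero_of_norm_ne_zero (hu ▸ one_ne_zero))]
    simp
  simp_rw [hsplit]
  rw [integral_mul_comp_orthogonalProjectionOnto (ℝ ∙ u)
      (fun y ↦ Real.exp (-‖y‖ ^ 2) * f ⟪u, y⟫) fun z ↦ Real.exp (-1 * ‖z‖ ^ 2),
    hline, GaussianFourier.integral_rexp_neg_mul_sq_norm one_pos, hrank, div_one, mul_comm]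

theorem integral_smul_self_mem_of_reflection_invariant (K : Submodule ℝ E) {f : E → ℝ}
    (hf : ∀ x, f (K.reflection x) = f x) : ∫ x, f x • x ∈ K := by
  rw [← K.reflection_eq_self_iff]
  calc
    K.reflection (∫ x, f x • x) = ∫ x, K.reflection (f x • x) :=
      (K.reflection.toContinuousLinearEquiv.integral_comp_comm _).symm
    _ = ∫ x, f (K.reflection x) • K.reflection x := by simp only [map_smul, hf]
    _ = ∫ x, f x • x := K.reflection.measurePreserving.integral_comp
      K.reflection.toHomeomorph.measurableEmbedding fun x ↦ f x • x

end GaussianIntegrals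

section HalfSpace

open Module

variable {E : Type*} [NormedAddCommGroup E] [InnerProductSpace ℝ E]

/-- The open half-space with inner normal `m`. It is empty for `m = 0`. -/
def openHalfSpace (m : E) : Set E := {x | 0 < ⟪m, x⟫}

theorem smul_mem_openHalfSpace_iff (m : E) (r : ℝ) (hr : 0 < r) (x : E) :
    r • x ∈ openHalfSpace m ↔ x ∈ openHalfSpace m := by
  simp [openHalfSpace, inner_smul_right, hr]

theorem openHalfSpace_smul {r : ℝ} (hr : 0 < r) (m : E) :
    openHalfSpace (r • m) = openHalfSpace m := by
  simp [openHalfSpace, inner_smul_left, hr]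

theorem measurableSet_openHalfSpace [MeasurableSpace E] [BorelSpace E] (m : E) :
    MeasurableSet (openHalfSpace m) :=
  (isOpen_lt continuous_const (by fun_prop)).measurableSet

variable [FiniteDimensional ℝ E]

theorem map_mem_openHalfSpace_iff {F : Type*} [NormedAddCommGroup F] [InnerProductSpace ℝ F]
    [FiniteDimensional ℝ F] (A : E →ₗ[ℝ] F) (m : F) (x : E) :
    A x ∈ openHalfSpace m ↔ x ∈ openHalfSpace (A.adjoint m) := by
  simp [openHalfSpace, LinearMap.adjoint_inner_left]

variable [MeasurableSpace E] [BorelSpace E]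

theorem setIntegral_openHalfSpace_exp_neg_sq_norm_smul_of_norm_eq_one {u : E} (hu : ‖u‖ = 1) :
    ∫ x in openHalfSpace u, Real.exp (-‖x‖ ^ 2) • x =
      (Real.pi ^ (((finrank ℝ E : ℝ) - 1) / 2) / 2) • u := by
  have hmem : ∫ x in openHalfSpace u, Real.exp (-‖x‖ ^ 2) • x ∈ ℝ ∙ u := by
    rw [← integral_indicator (measurableSet_openHalfSpace u)]
    simp only [Set.indicator_smul_apply_left]
    refine integral_smul_self_mem_of_reflection_invariant (ℝ ∙ u) fun x ↦ ?_
    have hu_fixed : (ℝ ∙ u).reflection u = u :=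
      Submodule.reflection_mem_subspace_eq_self (Submodule.mem_span_singleton_self u)
    have hinner : ⟪u, (ℝ ∙ u).reflection x⟫ = ⟪u, x⟫ := by
      simpa only [hu_fixed] using (ℝ ∙ u).reflection.inner_map_map u x
    simp [Set.indicator_apply, openHalfSpace, hinner]
  obtain ⟨c, hc⟩ := Submodule.mem_span_singleton.1 hmem
  have hcoeff : c = Real.pi ^ (((finrank ℝ E : ℝ) - 1) / 2) / 2 := calc
    c = ⟪u, c • u⟫ := by simp [inner_smul_right, hu]
    _ = ∫ x in openHalfSpace u, ⟪u, Real.exp (-‖x‖ ^ 2) • x⟫ := by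
      rw [hc, integral_inner (integrable_exp_neg_sq_norm_smul volume).integrableOn]
    _ = ∫ x : E, Real.exp (-‖x‖ ^ 2) * (Set.Ioi 0).indicator id ⟪u, x⟫ := by
      rw [← integral_indicator (measurableSet_openHalfSpace u)]
      refine integral_congr_ae (.of_forall fun x ↦ ?_)
      simp [Set.indicator_apply, openHalfSpace, inner_smul_right]
    _ = Real.pi ^ (((finrank ℝ E : ℝ) - 1) / 2) / 2 := by
      rw [integral_exp_neg_sq_norm_mul_comp_inner hu, integral_exp_neg_sq_mul_indicator_Ioi_id,
        mul_one_div]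
  rw [← hc, hcoeff]

theorem setIntegral_openHalfSpace_exp_neg_sq_norm_smul (m : E) :
    ∫ x in openHalfSpace m, Real.exp (-‖x‖ ^ 2) • x =
      (Real.pi ^ (((finrank ℝ E : ℝ) - 1) / 2) / (2 * ‖m‖)) • m := by
  rcases eq_or_ne m 0 with rfl | hm
  · simp [openHalfSpace]
  · have hm' : 0 < ‖m‖⁻¹ := inv_pos.2 (norm_pos_iff.2 hm)
    have hunit : ‖‖m‖⁻¹ • m‖ = 1 := norm_smul_inv_norm (𝕜 := ℝ) hm
    rw [← openHalfSpace_smul hm',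
      setIntegral_openHalfSpace_exp_neg_sq_norm_smul_of_norm_eq_one hunit,
      smul_smul, div_mul_eq_div_div, ← div_eq_mul_inv]

theorem setIntegral_openHalfSpace_exp_neg_sq_norm_symm_smul (A : E ≃ₗ[ℝ] E) (m : E) :
    ∫ x in openHalfSpace m, Real.exp (-‖A.symm x‖ ^ 2) • x =
      (|LinearMap.det (A : E →ₗ[ℝ] E)| * (Real.pi ^ (((finrank ℝ E : ℝ) - 1) / 2) /
        (2 * ‖(A : E →ₗ[ℝ] E).adjoint m‖))) • A ((A : E →ₗ[ℝ] E).adjoint m) := by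
  have hdet : |LinearMap.det (A : E →ₗ[ℝ] E)| ≠ 0 := abs_ne_zero.2 A.isUnit_det'.ne_zero
  have hpre : A ⁻¹' openHalfSpace m = openHalfSpace ((A : E →ₗ[ℝ] E).adjoint m) :=
    Set.ext fun x ↦ map_mem_openHalfSpace_iff (A : E →ₗ[ℝ] E) m x
  have hmap : ∫ y in A ⁻¹' openHalfSpace m, Real.exp (-‖y‖ ^ 2) • A y =
      A (∫ y in A ⁻¹' openHalfSpace m, Real.exp (-‖y‖ ^ 2) • y) := by
    simpa using A.toContinuousLinearEquiv.toContinuousLinearMap.integral_comp_comm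
      ((integrable_exp_neg_sq_norm_smul volume).integrableOn (s := A ⁻¹' openHalfSpace m))
  have hsubst := setIntegral_preimage_linearEquiv volume A (openHalfSpace m)
    fun x ↦ Real.exp (-‖A.symm x‖ ^ 2) • x
  simp only [LinearEquiv.symm_apply_apply] at hsubst
  rw [mul_smul, ← map_smul, ← setIntegral_openHalfSpace_exp_neg_sq_norm_smul, ← hpre, ← hmap,
    hsubst, smul_inv_smul₀ hdet]

theorem setIntegral_toSphere_openHalfSpace_inv_norm_symm_pow_smul [Nontrivial E] (A : E ≃ₗ[ℝ] E)
    (m : E) :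
    ∫ n : Metric.sphere (0 : E) 1 in (↑) ⁻¹' openHalfSpace m,
        (‖A.symm (n : E)‖ ^ (finrank ℝ E + 1))⁻¹ • (n : E) ∂(volume : Measure E).toSphere =
      (Real.pi ^ (((finrank ℝ E : ℝ) - 1) / 2) / Real.Gamma ((finrank ℝ E + 1) / 2) *
        |LinearMap.det (A : E →ₗ[ℝ] E)| / ‖(A : E →ₗ[ℝ] E).adjoint m‖) •
          A ((A : E →ₗ[ℝ] E).adjoint m) := by
  have hΓ : Real.Gamma ((finrank ℝ E + 1) / 2) / 2 ≠ 0 :=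
    (half_pos (Real.Gamma_pos_of_pos (by positivity))).ne'
  have hradial (n : Metric.sphere (0 : E) 1) :=
    integral_Ioi_pow_smul_exp_neg_sq_norm_map_smul (A.symm : E →ₗ[ℝ] E) (x := n)
      (A.symm.map_ne_zero_iff.2 (Metric.ne_of_mem_sphere n.2 one_ne_zero))
  simp only [LinearEquiv.coe_coe] at hradial
  have hpolar := setIntegral_eq_integral_toSphere_integral_Ioi volume
    (measurableSet_openHalfSpace m) (smul_mem_openHalfSpace_iff m)
    (integrable_exp_neg_sq_norm_symm_smul volume A).integrableOn
  simp only [setIntegral_openHalfSpace_exp_neg_sq_norm_symm_smul,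
    hradial, integral_smul] at hpolar
  rw [← inv_smul_eq_iff₀ hΓ] at hpolar
  rw [← hpolar, smul_smul]
  congr 1
  field_simp

end HalfSpace

section Matrix

open Matrix

variable {ι : Type*} [Fintype ι] [DecidableEq ι]

/-- The linear automorphism of Euclidean space given by an invertible matrix `T`, with inverse
given by `T⁻¹`. -/
noncomputable def toEuclideanLinEquiv (T : Matrix ι ι ℝ) (hT : IsUnit T.det) :
    EuclideanSpace ℝ ι ≃ₗ[ℝ] EuclideanSpace ℝ ι :=
  LinearEquiv.ofLinearMap (toEuclideanLin T) (toEuclideanLin T⁻¹)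
    (by rw [← Matrix.toLpLin_mul_same, mul_nonsing_inv T hT]; simp)
    (by rw [← Matrix.toLpLin_mul_same, nonsing_inv_mul T hT]; simp)

@[simp]
theorem coe_toEuclideanLinEquiv (T : Matrix ι ι ℝ) (hT : IsUnit T.det) :
    (toEuclideanLinEquiv T hT : EuclideanSpace ℝ ι →ₗ[ℝ] EuclideanSpace ℝ ι) = toEuclideanLin T :=
  rfl

@[simp]
theorem toEuclideanLinEquiv_apply (T : Matrix ι ι ℝ) (hT : IsUnit T.det)
    (x : EuclideanSpace ℝ ι) : toEuclideanLinEquiv T hT x = toEuclideanLin T x :=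
  rfl

@[simp]
theorem toEuclideanLinEquiv_symm_apply (T : Matrix ι ι ℝ) (hT : IsUnit T.det)
    (x : EuclideanSpace ℝ ι) : (toEuclideanLinEquiv T hT).symm x = toEuclideanLin T⁻¹ x :=
  rfl

theorem adjoint_toEuclideanLin (T : Matrix ι ι ℝ) :
    (toEuclideanLin T).adjoint = toEuclideanLin Tᵀ := by
  rw [← conjTranspose_eq_transpose_of_trivial, toEuclideanLin_conjTranspose_eq_adjoint]

theorem inner_toEuclideanLin_transpose_mul_self (T : Matrix ι ι ℝ) (x : EuclideanSpace ℝ ι) :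
    ⟪x, toEuclideanLin (Tᵀ * T) x⟫ = ‖toEuclideanLin T x‖ ^ 2 := by
  rw [Matrix.toLpLin_mul_same, LinearMap.comp_apply, ← adjoint_toEuclideanLin,
    LinearMap.adjoint_inner_right, real_inner_self_eq_norm_sq]

theorem norm_toEuclideanLin_transpose (T : Matrix ι ι ℝ) (x : EuclideanSpace ℝ ι) :
    ‖toEuclideanLin Tᵀ x‖ = √⟪x, toEuclideanLin (T * Tᵀ) x⟫ := by
  have h := inner_toEuclideanLin_transpose_mul_self Tᵀ x
  rw [transpose_transpose] at h
  rw [h, Real.sqrt_sq (norm_nonneg _)]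

theorem stmt7_general (T : Matrix ι ι ℝ) (hT : IsUnit T.det) (N : ℝ)
    (J : Metric.sphere (0 : EuclideanSpace ℝ ι) 1 → ℝ)
    (hJ : ∀ n, J n = N / ⟪(n : EuclideanSpace ℝ ι),
      toEuclideanLin (T⁻¹ᵀ * T⁻¹) (n : EuclideanSpace ℝ ι)⟫ ^ (((Fintype.card ι : ℝ) + 1) / 2))
    (n₀ : Metric.sphere (0 : EuclideanSpace ℝ ι) 1) :
    ∫ n, (Set.indicator
          {p : Metric.sphere (0 : EuclideanSpace ℝ ι) 1 |
            0 < ⟪(n₀ : EuclideanSpace ℝ ι), (p : EuclideanSpace ℝ ι)⟫}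
          J n) • (n : EuclideanSpace ℝ ι)
        ∂(volume : Measure (EuclideanSpace ℝ ι)).toSphere
      = (Real.pi ^ (((Fintype.card ι : ℝ) - 1) / 2) / Real.Gamma (((Fintype.card ι : ℝ) + 1) / 2) *
          N * |T.det| /
          √⟪(n₀ : EuclideanSpace ℝ ι), toEuclideanLin (T * Tᵀ) (n₀ : EuclideanSpace ℝ ι)⟫) •
        toEuclideanLin (T * Tᵀ) (n₀ : EuclideanSpace ℝ ι) := by
  have : Nontrivial (EuclideanSpace ℝ ι) := ⟨n₀, 0, Metric.ne_of_mem_sphere n₀.2 one_ne_zero⟩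
  let A := toEuclideanLinEquiv T hT
  have hdensity (n : Metric.sphere (0 : EuclideanSpace ℝ ι) 1) :
      J n = N * (‖A.symm (n : EuclideanSpace ℝ ι)‖ ^ (Fintype.card ι + 1))⁻¹ := by
    rw [hJ, inner_toEuclideanLin_transpose_mul_self, ← Real.rpow_natCast_mul (norm_nonneg _),
      toEuclideanLinEquiv_symm_apply, ← Real.rpow_natCast, div_eq_mul_inv]
    push_cast
    rw [mul_div_cancel₀ _ two_ne_zero]
  calc
    _ = ∫ n : Metric.sphere (0 : EuclideanSpace ℝ ι) 1 in
          (↑) ⁻¹' openHalfSpace (n₀ : EuclideanSpace ℝ ι),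
          J n • (n : EuclideanSpace ℝ ι) ∂(volume : Measure (EuclideanSpace ℝ ι)).toSphere := by
      rw [← integral_indicator (measurable_subtype_coe (measurableSet_openHalfSpace _))]
      simp only [Set.indicator_smul_apply_left]
      rfl
    _ = _ := by
      have hsphere :=
        setIntegral_toSphere_openHalfSpace_inv_norm_symm_pow_smul A (n₀ : EuclideanSpace ℝ ι)
      rw [finrank_euclideanSpace, coe_toEuclideanLinEquiv, adjoint_toEuclideanLin,
        norm_toEuclideanLin_transpose, LinearMap.det_toLpLin, toEuclideanLinEquiv_apply,
        ← LinearMap.comp_apply, ← Matrix.toLpLin_mul_same] at hsphere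
      simp only [hdensity, mul_smul N, integral_smul, hsphere]
      rw [smul_smul]
      congr 1
      ring

end Matrix

theorem stmt7 (T : Matrix (Fin 3) (Fin 3) ℝ) (hT : IsUnit T.det) (hTsymm : T.IsSymm
    )
    (N : ℝ) (hN : 0 < N)
    (J : Metric.sphere (0 : EuclideanSpace ℝ (Fin 3)) 1 → ℝ)
    (hJ : ∀ n, J n = N / (⟪(n : EuclideanSpace ℝ (Fin 3)),
        Matrix.toEuclideanLin (T⁻¹ * T⁻¹) (n : EuclideanSpace ℝ (Fin 3))⟫)^2)
    (hnorm : ∫ n, J n ∂(volume : Measure (EuclideanSpace ℝ (Fin 3))).toSphere = 1)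
    (n₀ : Metric.sphere (0 : EuclideanSpace ℝ (Fin 3)) 1) :
    ∫ n, (Set.indicator
          {p : Metric.sphere (0 : EuclideanSpace ℝ (Fin 3)) 1 |
            0 < ⟪(n₀ : EuclideanSpace ℝ (Fin 3)), (p : EuclideanSpace ℝ (Fin 3))⟫}
          J n) • (n : EuclideanSpace ℝ (Fin 3))
        ∂(volume : Measure (EuclideanSpace ℝ (Fin 3))).toSphere
      = (Real.pi * N * |T.det| /
          Real.sqrt (⟪(n₀ : EuclideanSpace ℝ (Fin 3)),
            Matrix.toEuclideanLin (T * T) (n₀ : EuclideanSpace ℝ (Fin 3))⟫)) •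
        Matrix.toEuclideanLin (T * T) (n₀ : EuclideanSpace ℝ (Fin 3)) := by
  have hadd : ((3 : ℝ) + 1) / 2 = 2 := by norm_num
  have hsub : ((3 : ℝ) - 1) / 2 = 1 := by norm_num
  simpa [-Matrix.toLpLin_mul_same, hTsymm.eq, hadd, hsub] using
    stmt7_general T hT N J (by simpa [-Matrix.toLpLin_mul_same, hTsymm.inv.eq, hadd] using hJ) n₀
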